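/- Let σ : [0,1] → ℝ be absolutely continuous (or Lipschitz) with |σ'(t)| ≤ 8 almost everywhere, and let t₋ < t₊ in [0,1] satisfy |σ(t₋) − σ(t₊)| ≥ ε(1/2 − 1/50). Then the Lebesgue measure of {t ∈ [t₋, t₊] : dist(σ(t), (ε/2)ℤ) ≥ ε/100} is at least ε/20. -/

import Mathlib

/-!
The points within `δ` of `pℤ` are the preimage of a ball of radius `δ` in the circle `ℝ / pℤ`, so
they occupy measure at most `2δ` in each period. An interval of length `ℓ` is covered by fewer than
`ℓ / p + 1` periods, so it contains measure at least `ℓ - 2δ (ℓ / p + 1)` of points far from `pℤ`.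
A continuous function takes all values between those at its endpoints, and a `K`-Lipschitz function
multiplies measure by at most `K`.
-/

open AddSubgroup Metric MeasureTheory Set
open scoped NNReal

theorem volume_image_le_of_lipschitzOnWith {K : ℝ≥0} {f : ℝ → ℝ} {s : Set ℝ}
    (hf : LipschitzOnWith K f s) : volume (f '' s) ≤ K * volume s := by
  simpa [← hausdorffMeasure_real] using hf.hausdorffMeasure_image_le zero_le_one

theorem volume_uIcc_inter_le_mul_volume_preimage {K : ℝ≥0} {f : ℝ → ℝ} {a b : ℝ}
    (hf : LipschitzOnWith K f (uIcc a b)) (s : Set ℝ) :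
    volume (uIcc (f a) (f b) ∩ s) ≤ K * volume (uIcc a b ∩ f ⁻¹' s) := by
  calc volume (uIcc (f a) (f b) ∩ s)
      ≤ volume (f '' uIcc a b ∩ s) := by
        gcongr
        exact intermediate_value_uIcc hf.continuousOn
    _ = volume (f '' (uIcc a b ∩ f ⁻¹' s)) := by rw [image_inter_preimage]
    _ ≤ K * volume (uIcc a b ∩ f ⁻¹' s) :=
        volume_image_le_of_lipschitzOnWith (hf.mono inter_subset_left)

theorem volume_Ioc_inter_preimage_coe_addCircle {p : ℝ} [Fact (0 < p)] (a : ℝ) (n : ℕ)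
    {s : Set (AddCircle p)} (hs : MeasurableSet s) :
    volume (Ioc a (a + n * p) ∩ (↑) ⁻¹' s) = n * volume s := by
  have hp : 0 < p := Fact.out
  induction n with
  | zero => simp
  | succ n ih =>
    have hsplit : Ioc a (a + (n + 1 : ℕ) * p) =
        Ioc a (a + n * p) ∪ Ioc (a + n * p) (a + n * p + p) := by
      rw [Ioc_union_Ioc_eq_Ioc (le_add_of_nonneg_right (by positivity))
        (le_add_of_nonneg_right hp.le)]
      push_cast
      ring_nf
    have hdisj : Disjoint (Ioc a (a + n * p) ∩ (↑) ⁻¹' s)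
        (Ioc (a + n * p) (a + n * p + p) ∩ (↑) ⁻¹' s) :=
      (Ioc_disjoint_Ioc_of_le le_rfl).mono inter_subset_left inter_subset_left
    rw [hsplit, union_inter_distrib_right,
      measure_union hdisj (measurableSet_Ioc.inter (AddCircle.measurable_mk' hs)), ih,
      inter_comm (Ioc _ _), ← AddCircle.add_projection_respects_measure p _ hs]
    push_cast
    ring

theorem volume_Ioc_inter_infDist_zmultiples_lt_le {p δ a b : ℝ} (hp : 0 < p) (hδ : 0 ≤ δ)
    (hab : a ≤ b) :
    volume (Ioc a b ∩ {y | infDist y (zmultiples p) < δ}) ≤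
      ENNReal.ofReal (2 * δ * ((b - a) / p + 1)) := by
  have : Fact (0 < p) := ⟨hp⟩
  set n := ⌈(b - a) / p⌉₊
  have hball : {y : ℝ | infDist y (zmultiples p) < δ} = (↑) ⁻¹' ball (0 : AddCircle p) δ := by
    ext y
    rw [mem_preimage, mem_ball_zero_iff, mem_ofPred_eq, ← QuotientAddGroup.norm_mk]
  have hcover : b ≤ a + n * p := by
    have := (div_le_iff₀ hp).1 (Nat.le_ceil ((b - a) / p))
    linarith
  have hn : (n : ℝ) ≤ (b - a) / p + 1 :=
    (Nat.ceil_lt_add_one (div_nonneg (sub_nonneg.2 hab) hp.le)).le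
  calc volume (Ioc a b ∩ {y | infDist y (zmultiples p) < δ})
      ≤ volume (Ioc a (a + n * p) ∩ (↑) ⁻¹' ball (0 : AddCircle p) δ) := by
        rw [hball]
        gcongr
    _ = n * volume (ball (0 : AddCircle p) δ) :=
        volume_Ioc_inter_preimage_coe_addCircle a n measurableSet_ball
    _ ≤ n * ENNReal.ofReal (2 * δ) := by
        gcongr
        exact (measure_mono ball_subset_closedBall).trans <|
          (AddCircle.volume_closedBall p δ).trans_le <| ENNReal.ofReal_le_ofReal <| min_le_right _ _
    _ = ENNReal.ofReal (2 * δ * n) := by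
        rw [mul_comm, ENNReal.ofReal_mul (p := 2 * δ) (by positivity), ENNReal.ofReal_natCast]
    _ ≤ ENNReal.ofReal (2 * δ * ((b - a) / p + 1)) := by gcongr

theorem ofReal_le_volume_uIcc_inter_le_infDist_zmultiples {p δ : ℝ} (hp : 0 < p) (hδ : 0 ≤ δ)
    (a b : ℝ) :
    ENNReal.ofReal (|a - b| - 2 * δ * (|a - b| / p + 1)) ≤
      volume (uIcc a b ∩ {y | δ ≤ infDist y (zmultiples p)}) := by
  wlog hab : a ≤ b generalizing a b
  · rw [abs_sub_comm, uIcc_comm]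
    exact this b a (le_of_not_ge hab)
  rw [abs_sub_comm, abs_of_nonneg (sub_nonneg.2 hab), uIcc_of_le hab,
    ENNReal.ofReal_sub _ (by have := sub_nonneg.2 hab; positivity), ← Real.volume_Ioc]
  calc volume (Ioc a b) - ENNReal.ofReal (2 * δ * ((b - a) / p + 1))
      ≤ volume (Ioc a b) - volume (Ioc a b ∩ {y | infDist y (zmultiples p) < δ}) :=
        tsub_le_tsub_left (volume_Ioc_inter_infDist_zmultiples_lt_le hp hδ hab) _
    _ ≤ volume (Ioc a b \ (Ioc a b ∩ {y | infDist y (zmultiples p) < δ})) := le_measure_sdiff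
    _ ≤ volume (Icc a b ∩ {y | δ ≤ infDist y (zmultiples p)}) := by
        refine measure_mono fun y ⟨hy, hfar⟩ ↦ ⟨Ioc_subset_Icc_self hy, ?_⟩
        rw [mem_ofPred_eq, ← not_lt]
        exact fun hnear ↦ hfar ⟨hy, hnear⟩

theorem stmt_7_general {K : ℝ≥0} (hK : 0 < K) {f : ℝ → ℝ} {a b p δ : ℝ}
    (hf : LipschitzOnWith K f (uIcc a b)) (hp : 0 < p) (hδ : 0 ≤ δ) :
    ENNReal.ofReal ((|f a - f b| - 2 * δ * (|f a - f b| / p + 1)) / K) ≤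
      volume {t ∈ uIcc a b | δ ≤ infDist (f t) (zmultiples p)} := by
  rw [ENNReal.ofReal_div_of_pos (NNReal.coe_pos.2 hK), ENNReal.ofReal_coe_nnreal]
  exact ENNReal.div_le_of_le_mul' <|
    (ofReal_le_volume_uIcc_inter_le_infDist_zmultiples hp hδ _ _).trans <|
      volume_uIcc_inter_le_mul_volume_preimage hf _

theorem setOf_eq_mul_intCast_eq_zmultiples (p : ℝ) :
    {y : ℝ | ∃ m : ℤ, y = p * m} = zmultiples p := by
  ext y
  simp [mem_zmultiples_iff, mul_comm, eq_comm]

theorem stmt_7 (ε : ℝ) (hε : 0 < ε) (σ : ℝ → ℝ) (hσ : LipschitzWith 8 σ)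
    (tm tp : ℝ) (h01 : tm ∈ Set.Icc (0 : ℝ) 1) (h01' : tp ∈ Set.Icc (0 : ℝ) 1)
    (hle : tm ≤ tp)
    (hfar : ε * (1 / 2 - 1 / 50) ≤ |σ tm - σ tp|) :
    ENNReal.ofReal (ε / 20) ≤
      MeasureTheory.volume
        {t ∈ Set.Icc tm tp |
          ε / 100 ≤ Metric.infDist (σ t) {y : ℝ | ∃ m : ℤ, y = (ε / 2) * m}} := by
  rw [setOf_eq_mul_intCast_eq_zmultiples, ← uIcc_of_le hle]
  refine (ENNReal.ofReal_le_ofReal ?_).trans <|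
    stmt_7_general (by norm_num) hσ.lipschitzOnWith (half_pos hε) (by positivity : 0 ≤ ε / 100)
  have hratio : 2 * (ε / 100) * (|σ tm - σ tp| / (ε / 2) + 1) = |σ tm - σ tp| / 25 + ε / 50 := by
    field_simp
    ring
  rw [hratio, NNReal.coe_ofNat]
  linarith
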